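/- Let E and X be finite dimensional Banach spaces with dim X ≤ dim E, and let F be a Banach space. Then K_G(X,F) ≤ f(X,E)²·K_G(E,F), and likewise K_G^+(X,F) ≤ f(X,E)²·K_G^+(E,F). -/

import Mathlib

/-!
Given a factorization `id_X = v ∘ u` through `E`, a map `A : X → X*` is transported to
`v* A v : E → E*`, and `w : X* → F` to `w u* : E* → F`. Since `v u = id`, the composite
`(w u*) (v* A v)ᵀ` restricts along `u` to `w Aᵀ`. Hence, by the ideal property of the projective norm
(`projNorm_comp_le`), the projective norm of `w Aᵀ` is at most `(‖u‖ ‖v‖)²` times that of an element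
admissible in the definition of the constant of `(E, F)`; this is `exists_transfer`. Transport
preserves non-negativity, because `v* (η ⊗ η) v = (η v) ⊗ (η v)`, so one argument serves both
constants. The infimum over factorizations then gives the claim. As suprema of unbounded sets and
infima of empty sets are junk values, one also needs the constants of `(E, F)` to be finite
(`exists_projNorm_comp_flip_le`) and a factorization to exist (`exists_factorization`).
-/

open scoped BigOperators

/-- The projective tensor norm of the element of `X* ⊗ F` corresponding (via the canonical
identification, `X` finite dimensional) to the continuous linear map `u : X → F`. -/
noncomputable def projNorm {X F : Type*} [NormedAddCommGroup X] [NormedSpace ℝ X]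
    [NormedAddCommGroup F] [NormedSpace ℝ F] (u : X →L[ℝ] F) : ℝ :=
  sInf { r : ℝ | ∃ (k : ℕ) (η : Fin k → (X →L[ℝ] ℝ)) (f : Fin k → F),
    (∀ x, u x = ∑ i, η i x • f i) ∧ r = ∑ i, ‖η i‖ * ‖f i‖ }

/-- The Grothendieck constant `K_G(E,F)`.  An element of `E ⊗ F` is encoded as a map
`u : E* → F`, an element of `E* ⊗ F` as a map `E → F`, and `A ⊗ id_F` sends `u` to
`u ∘ Aᵀ`, where `Aᵀ = A.flip : E → E*`. -/
noncomputable def KG (E F : Type*) [NormedAddCommGroup E] [NormedSpace ℝ E]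
    [NormedAddCommGroup F] [NormedSpace ℝ F] : ℝ :=
  sSup { r : ℝ | ∃ (A : E →L[ℝ] (E →L[ℝ] ℝ)) (u : (E →L[ℝ] ℝ) →L[ℝ] F),
    ‖A‖ ≤ 1 ∧ ‖u‖ ≤ 1 ∧ r = projNorm (u.comp A.flip) }

/-- `ρ(E,F)`: the norm of the identity from `E ⊗̌ F` to `E ⊗̂ F`. -/
noncomputable def rho (E F : Type*) [NormedAddCommGroup E] [NormedSpace ℝ E]
    [NormedAddCommGroup F] [NormedSpace ℝ F] : ℝ :=
  sSup { r : ℝ | ∃ u : (E →L[ℝ] ℝ) →L[ℝ] F, ‖u‖ ≤ 1 ∧ r = projNorm u }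

/-- `A : E → E*` is non-negative: the corresponding tensor in `E* ⊗ E*` is a (finite) sum of
symmetric tensors `η ⊗ η`, i.e. lies in the convex hull of such tensors. -/
def IsNonnegMap {E : Type*} [NormedAddCommGroup E] [NormedSpace ℝ E]
    (A : E →L[ℝ] (E →L[ℝ] ℝ)) : Prop :=
  ∃ (k : ℕ) (η : Fin k → (E →L[ℝ] ℝ)), ∀ x, A x = ∑ i, η i x • η i

/-- A tensor `z ∈ E ⊗ E` (encoded as a map `E* → E`) is non-negative if it is a finite sum of
symmetric tensors `e ⊗ e`. -/
def IsNonnegTensor {E : Type*} [NormedAddCommGroup E] [NormedSpace ℝ E]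
    (z : (E →L[ℝ] ℝ) →L[ℝ] E) : Prop :=
  ∃ (k : ℕ) (e : Fin k → E), ∀ φ, z φ = ∑ i, φ (e i) • e i

/-- The positive Grothendieck constant `K_G⁺(E,F)`. -/
noncomputable def KGpos (E F : Type*) [NormedAddCommGroup E] [NormedSpace ℝ E]
    [NormedAddCommGroup F] [NormedSpace ℝ F] : ℝ :=
  sSup { r : ℝ | ∃ (A : E →L[ℝ] (E →L[ℝ] ℝ)) (u : (E →L[ℝ] ℝ) →L[ℝ] F),
    IsNonnegMap A ∧ ‖A‖ ≤ 1 ∧ ‖u‖ ≤ 1 ∧ r = projNorm (u.comp A.flip) }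

/-- The factorization constant `f(X,E)` of `X` through `E`. -/
noncomputable def factConst (X E : Type*) [NormedAddCommGroup X] [NormedSpace ℝ X]
    [NormedAddCommGroup E] [NormedSpace ℝ E] : ℝ :=
  sInf { r : ℝ | ∃ (u : X →L[ℝ] E) (v : E →L[ℝ] X),
    v.comp u = ContinuousLinearMap.id ℝ X ∧ r = ‖u‖ * ‖v‖ }

/-- `γ(E) = sup { tr(BA) : A ≥ 0, B ≥ 0, ‖A‖ ≤ 1, ‖B‖ ≤ 1 }`. -/
noncomputable def gammaConst (E : Type*) [NormedAddCommGroup E] [NormedSpace ℝ E] : ℝ :=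
  sSup { r : ℝ | ∃ (A : E →L[ℝ] (E →L[ℝ] ℝ)) (B : (E →L[ℝ] ℝ) →L[ℝ] E),
    IsNonnegMap A ∧ IsNonnegTensor B ∧ ‖A‖ ≤ 1 ∧ ‖B‖ ≤ 1 ∧
    r = LinearMap.trace ℝ E ((B.comp A : E →L[ℝ] E) : E →ₗ[ℝ] E) }

/-- `ρ⁺(E)`: as `ρ(E,E)` but the supremum is restricted to non-negative tensors. -/
noncomputable def rhoPlus (E : Type*) [NormedAddCommGroup E] [NormedSpace ℝ E] : ℝ :=
  sSup { r : ℝ | ∃ z : (E →L[ℝ] ℝ) →L[ℝ] E,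
    IsNonnegTensor z ∧ ‖z‖ ≤ 1 ∧ r = projNorm z }

/-- `X` has (Rademacher) cotype `q`. -/
def HasCotype (X : Type*) [NormedAddCommGroup X] [NormedSpace ℝ X] (q : ℝ) : Prop :=
  ∃ C > 0, ∀ (n : ℕ) (x : Fin n → X),
    (∑ i, ‖x i‖ ^ q) ^ (1/q) ≤
      C * (((2 : ℝ) ^ n)⁻¹ *
        ∑ ε : Fin n → Bool, ‖∑ i, (if ε i then (1:ℝ) else -1) • x i‖ ^ 2) ^ (1/2 : ℝ)

/-- A lower bound that holds along `g` on a set persists at its infimum, by continuity. -/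
lemma le_apply_sInf {S : Set ℝ} (hne : S.Nonempty) (hb : BddBelow S) {g : ℝ → ℝ}
    (hg : Continuous g) {a : ℝ} (h : ∀ s ∈ S, a ≤ g s) : a ≤ g (sInf S) :=
  closure_minimal (t := {s | a ≤ g s}) h (isClosed_le continuous_const hg)
    (csInf_mem_closure hne hb)

section

variable {X E F : Type*}
  [NormedAddCommGroup X] [NormedSpace ℝ X]
  [NormedAddCommGroup E] [NormedSpace ℝ E]
  [NormedAddCommGroup F] [NormedSpace ℝ F]

lemma projNorm_le (w : X →L[ℝ] F) {k : ℕ} (η : Fin k → (X →L[ℝ] ℝ)) (f : Fin k → F)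
    (h : ∀ x, w x = ∑ i, η i x • f i) : projNorm w ≤ ∑ i, ‖η i‖ * ‖f i‖ := by
  refine csInf_le ⟨0, ?_⟩ ⟨k, η, f, h, rfl⟩
  rintro _ ⟨k, η, f, -, rfl⟩
  positivity

lemma projNorm_nonneg (w : X →L[ℝ] F) : 0 ≤ projNorm w := by
  refine Real.sInf_nonneg ?_
  rintro _ ⟨k, η, f, -, rfl⟩
  positivity

/-- The expansion of a map on a finite dimensional space in coordinates. -/
lemma apply_eq_sum_coord [FiniteDimensional ℝ X] (w : X →L[ℝ] F) (x : X) :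
    w x = ∑ i, (LinearMap.toContinuousLinearMap ((Module.finBasis ℝ X).coord i)) x •
      w (Module.finBasis ℝ X i) := by
  conv_lhs => rw [← (Module.finBasis ℝ X).sum_repr x, map_sum]
  simp

/-- The ideal property of the projective norm. -/
lemma projNorm_comp_le [FiniteDimensional ℝ E] (w : E →L[ℝ] F) (j : X →L[ℝ] E) :
    projNorm (w.comp j) ≤ ‖j‖ * projNorm w := by
  apply le_apply_sInf (g := fun s => ‖j‖ * s)
  · exact ⟨_, _, _, _, apply_eq_sum_coord w, rfl⟩
  · refine ⟨0, ?_⟩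
    rintro _ ⟨k, η, f, -, rfl⟩
    positivity
  · fun_prop
  · rintro _ ⟨k, η, f, h, rfl⟩
    refine (projNorm_le _ (fun i => (η i).comp j) f (fun x => by simp [h])).trans ?_
    rw [Finset.mul_sum]
    refine Finset.sum_le_sum fun i _ => ?_
    calc ‖(η i).comp j‖ * ‖f i‖ ≤ (‖η i‖ * ‖j‖) * ‖f i‖ := by
          gcongr
          exact ContinuousLinearMap.opNorm_comp_le _ _
      _ = ‖j‖ * (‖η i‖ * ‖f i‖) := by ring

/-- The Grothendieck constants of `(E, F)` are finite. -/
lemma exists_projNorm_comp_flip_le (E F : Type*)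
    [NormedAddCommGroup E] [NormedSpace ℝ E] [FiniteDimensional ℝ E]
    [NormedAddCommGroup F] [NormedSpace ℝ F] :
    ∃ C : ℝ, ∀ (A : E →L[ℝ] (E →L[ℝ] ℝ)) (u : (E →L[ℝ] ℝ) →L[ℝ] F), ‖A‖ ≤ 1 → ‖u‖ ≤ 1 →
      projNorm (u.comp A.flip) ≤ C := by
  refine ⟨∑ i, ‖LinearMap.toContinuousLinearMap ((Module.finBasis ℝ E).coord i)‖ *
    ‖Module.finBasis ℝ E i‖, fun A u hA hu => ?_⟩
  refine (projNorm_le _ _ _ (apply_eq_sum_coord _)).trans ?_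
  gcongr with i
  have hflip : ‖A.flip‖ ≤ 1 := by rwa [ContinuousLinearMap.opNorm_flip]
  exact (u.le_of_opNorm_le hu _).trans
    (by simpa using A.flip.le_of_opNorm_le hflip (Module.finBasis ℝ E i))

lemma norm_inv_smul_le (T : X →L[ℝ] E) : ‖‖T‖⁻¹ • T‖ ≤ 1 := by
  rw [norm_smul, norm_inv, norm_norm]
  exact inv_mul_le_one

/-- A factorization `v ∘ u = id` transports admissible pairs from `X` to `E`, at the cost of the
factor `(‖u‖ ‖v‖)²` and preserving non-negativity. -/
lemma exists_transfer [FiniteDimensional ℝ E] (u : X →L[ℝ] E) (v : E →L[ℝ] X)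
    (huv : v.comp u = ContinuousLinearMap.id ℝ X)
    (A : X →L[ℝ] (X →L[ℝ] ℝ)) (w : (X →L[ℝ] ℝ) →L[ℝ] F) (hA : ‖A‖ ≤ 1) (hw : ‖w‖ ≤ 1) :
    ∃ (A' : E →L[ℝ] (E →L[ℝ] ℝ)) (w' : (E →L[ℝ] ℝ) →L[ℝ] F),
      (IsNonnegMap A → IsNonnegMap A') ∧ ‖A'‖ ≤ 1 ∧ ‖w'‖ ≤ 1 ∧
      projNorm (w.comp A.flip) ≤ (‖u‖ * ‖v‖) ^ 2 * projNorm (w'.comp A'.flip) := by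
  -- Normalize both maps; when one of them is zero, `X` is trivial and the relation below still
  -- holds, with `0⁻¹ = 0`.
  set c := ‖u‖ * ‖v‖ with hc
  set j : X →L[ℝ] E := ‖u‖⁻¹ • u
  set q : E →L[ℝ] X := ‖v‖⁻¹ • v
  have hj : ‖j‖ ≤ 1 := norm_inv_smul_le u
  have hq : ‖q‖ ≤ 1 := norm_inv_smul_le v
  have hid : ∀ x, v (u x) = x := fun x => congrArg (fun T : X →L[ℝ] X => T x) huv
  have hqj : ∀ x, c • q (j x) = x := by
    intro x
    by_cases h0 : c = 0
    · have hx : x = 0 := by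
        rcases mul_eq_zero.mp h0 with h | h
        · rw [← hid x, norm_eq_zero.mp h]; simp
        · rw [← hid x, norm_eq_zero.mp h]; simp
      simp [hx]
    · have h1 : ‖u‖ ≠ 0 := left_ne_zero_of_mul h0
      have h2 : ‖v‖ ≠ 0 := right_ne_zero_of_mul h0
      have h3 : c * (‖u‖⁻¹ * ‖v‖⁻¹) = 1 := by rw [hc]; field_simp
      simp only [q, j, smul_apply, map_smul, hid, smul_smul]
      rw [h3, one_smul]
  let J : (E →L[ℝ] ℝ) →L[ℝ] (X →L[ℝ] ℝ) := (ContinuousLinearMap.compL ℝ X E ℝ).flip j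
  let Q : (X →L[ℝ] ℝ) →L[ℝ] (E →L[ℝ] ℝ) := (ContinuousLinearMap.compL ℝ E X ℝ).flip q
  have hJ : ‖J‖ ≤ 1 := ContinuousLinearMap.opNorm_le_bound _ zero_le_one fun φ => by
    rw [one_mul]
    exact (ContinuousLinearMap.opNorm_comp_le φ j).trans (mul_le_of_le_one_right (norm_nonneg _) hj)
  have hQ : ‖Q‖ ≤ 1 := ContinuousLinearMap.opNorm_le_bound _ zero_le_one fun φ => by
    rw [one_mul]
    exact (ContinuousLinearMap.opNorm_comp_le φ q).trans (mul_le_of_le_one_right (norm_nonneg _) hq)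
  refine ⟨Q.comp (A.comp q), w.comp J, ?_, ?_, ?_, ?_⟩
  · rintro ⟨k, η, h⟩
    refine ⟨k, fun i => (η i).comp q, fun x => ?_⟩
    ext y
    simp [Q, h]
  · calc ‖Q.comp (A.comp q)‖ ≤ ‖Q‖ * (‖A‖ * ‖q‖) :=
          (ContinuousLinearMap.opNorm_comp_le _ _).trans
            (by gcongr; exact ContinuousLinearMap.opNorm_comp_le _ _)
      _ ≤ 1 := mul_le_one₀ hQ (by positivity) (mul_le_one₀ hA (norm_nonneg _) hq)
  · exact (ContinuousLinearMap.opNorm_comp_le _ _).trans (mul_le_one₀ hw (norm_nonneg _) hJ)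
  · have key : w.comp A.flip =
        ((w.comp J).comp (Q.comp (A.comp q)).flip).comp (c ^ 2 • j) := by
      ext x
      simp only [ContinuousLinearMap.comp_apply]
      congr 1
      ext y
      -- One factor `c` restores each of the two arguments of `A`.
      conv_lhs => rw [← hqj x, ← hqj y]
      simp [J, Q]
      ring
    rw [key]
    refine (projNorm_comp_le _ _).trans ?_
    refine mul_le_mul_of_nonneg_right ?_ (projNorm_nonneg _)
    rw [norm_smul, norm_pow, Real.norm_eq_abs, sq_abs]
    exact mul_le_of_le_one_right (sq_nonneg c) hj

lemma exists_factorization [FiniteDimensional ℝ X] [FiniteDimensional ℝ E]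
    (hdim : Module.finrank ℝ X ≤ Module.finrank ℝ E) :
    ∃ (u : X →L[ℝ] E) (v : E →L[ℝ] X), v.comp u = ContinuousLinearMap.id ℝ X := by
  obtain ⟨f, hf⟩ : ∃ f : X →ₗ[ℝ] E, Function.Injective f := by
    let b := Module.finBasis ℝ X
    let e := Module.finBasis ℝ E
    refine ⟨b.constr ℝ (fun i => e (Fin.castLE hdim i)), ?_⟩
    exact b.injective_constr_of_linearIndependent
      (e.linearIndependent.comp _ (Fin.castLE_injective hdim))
  obtain ⟨g, hg⟩ := f.exists_leftInverse_of_injective (LinearMap.ker_eq_bot.mpr hf)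
  refine ⟨f.toContinuousLinearMap, g.toContinuousLinearMap, ?_⟩
  ext x
  exact LinearMap.congr_fun hg x

/-- To bound by `factConst X E ^ 2 * K` it suffices to bound over every factorization. -/
lemma le_factConst_sq_mul [FiniteDimensional ℝ X] [FiniteDimensional ℝ E]
    (hdim : Module.finrank ℝ X ≤ Module.finrank ℝ E) {a K : ℝ}
    (h : ∀ (u : X →L[ℝ] E) (v : E →L[ℝ] X), v.comp u = ContinuousLinearMap.id ℝ X →
      a ≤ (‖u‖ * ‖v‖) ^ 2 * K) : a ≤ factConst X E ^ 2 * K := by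
  obtain ⟨u, v, huv⟩ := exists_factorization hdim
  apply le_apply_sInf (g := fun s => s ^ 2 * K)
  · fun_prop
  · rintro _ ⟨u, v, huv, rfl⟩
    exact h u v huv
  · exact ⟨_, u, v, huv, rfl⟩
  · refine ⟨0, ?_⟩
    rintro _ ⟨u, v, -, rfl⟩
    positivity

end

/-- For finite dimensional `X`, `E` with `dim X ≤ dim E` and a Banach space `F`,
`K_G(X,F) ≤ f(X,E)²·K_G(E,F)`, and likewise for the positive constants. -/
theorem statement6 (X E F : Type*)
    [NormedAddCommGroup X] [NormedSpace ℝ X] [FiniteDimensional ℝ X]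
    [NormedAddCommGroup E] [NormedSpace ℝ E] [FiniteDimensional ℝ E]
    [NormedAddCommGroup F] [NormedSpace ℝ F] [CompleteSpace F]
    (hdim : Module.finrank ℝ X ≤ Module.finrank ℝ E) :
    KG X F ≤ factConst X E ^ 2 * KG E F ∧
    KGpos X F ≤ factConst X E ^ 2 * KGpos E F := by
  obtain ⟨C, hC⟩ := exists_projNorm_comp_flip_le E F
  refine ⟨le_factConst_sq_mul hdim fun u v huv => ?_, le_factConst_sq_mul hdim fun u v huv => ?_⟩
  · refine csSup_le ⟨_, 0, 0, ?_, ?_, rfl⟩ ?_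
    · exact ContinuousLinearMap.opNorm_zero.trans_le zero_le_one
    · exact ContinuousLinearMap.opNorm_zero.trans_le zero_le_one
    rintro _ ⟨A, w, hA, hw, rfl⟩
    obtain ⟨A', w', -, hA', hw', hle⟩ := exists_transfer u v huv A w hA hw
    refine hle.trans (mul_le_mul_of_nonneg_left (le_csSup ⟨C, ?_⟩ ⟨A', w', hA', hw', rfl⟩)
      (sq_nonneg _))
    rintro _ ⟨B, z, hB, hz, rfl⟩
    exact hC B z hB hz
  · refine csSup_le ⟨_, 0, 0, ⟨0, Fin.elim0, by simp⟩,
      ?_, ?_, rfl⟩ ?_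
    · exact ContinuousLinearMap.opNorm_zero.trans_le zero_le_one
    · exact ContinuousLinearMap.opNorm_zero.trans_le zero_le_one
    rintro _ ⟨A, w, hpos, hA, hw, rfl⟩
    obtain ⟨A', w', hpos', hA', hw', hle⟩ := exists_transfer u v huv A w hA hw
    refine hle.trans (mul_le_mul_of_nonneg_left
      (le_csSup ⟨C, ?_⟩ ⟨A', w', hpos' hpos, hA', hw', rfl⟩) (sq_nonneg _))
    rintro _ ⟨B, z, -, hB, hz, rfl⟩
    exact hC B z hB hz
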